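/- Let X be the class of labeled planar binary trees all of whose internal vertices are labeled x, and Y the class of trees all of whose internal vertices are labeled y. Let C_x be the least class of trees containing every tree of the form y(v,w) and closed under c ↦ x(c, w) for arbitrary w, and C_y the least class containing every tree of the form x(v,w) and closed under c ↦ y(c, w). Then a labeled planar binary tree contains no subtree of the form x(u, c) with c ∈ C_x and no subtree of the form y(u, c) with c ∈ C_y if and only if it belongs to the least class N satisfying: leaf ∈ N, x(u, α) ∈ N for all u ∈ N and α ∈ X, and y(u, β) ∈ N for all u ∈ N and β ∈ Y. -/

import Mathlib

/-- Planar binary trees with internal vertices labeled by one of two symbols `x`, `y`. -/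
inductive LTree : Type
  | leaf : LTree
  | x : LTree → LTree → LTree
  | y : LTree → LTree → LTree

namespace LTree

/-- The subtree relation. -/
inductive Subtree : LTree → LTree → Prop
  | refl (t : LTree) : Subtree t t
  | xl {s u v : LTree} : Subtree s u → Subtree s (x u v)
  | xr {s u v : LTree} : Subtree s v → Subtree s (x u v)
  | yl {s u v : LTree} : Subtree s u → Subtree s (y u v)
  | yr {s u v : LTree} : Subtree s v → Subtree s (y u v)

/-- Trees all of whose internal vertices are labeled `x`. -/
inductive PureX : LTree → Prop
  | leaf : PureX leaf
  | node {u v : LTree} : PureX u → PureX v → PureX (x u v)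

/-- Trees all of whose internal vertices are labeled `y`. -/
inductive PureY : LTree → Prop
  | leaf : PureY leaf
  | node {u v : LTree} : PureY u → PureY v → PureY (y u v)

/-- The least class `C_x` containing every tree `y(v,w)` and closed under
`c ↦ x(c, w)` for arbitrary `w`. -/
inductive Cx : LTree → Prop
  | base (v w : LTree) : Cx (y v w)
  | step {c : LTree} (w : LTree) : Cx c → Cx (x c w)

/-- The least class `C_y` containing every tree `x(v,w)` and closed under
`c ↦ y(c, w)` for arbitrary `w`. -/
inductive Cy : LTree → Prop
  | base (v w : LTree) : Cy (x v w)
  | step {c : LTree} (w : LTree) : Cy c → Cy (y c w)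

/-- A tree matches (at the root) a forbidden pattern of noncom-Bicom:
`x(u, c)` with `c ∈ C_x`, or `y(u, c)` with `c ∈ C_y`. -/
def IsBadBicom (s : LTree) : Prop :=
  (∃ u c, Cx c ∧ s = x u c) ∨ (∃ u c, Cy c ∧ s = y u c)

/-- A tree avoids all the forbidden patterns of noncom-Bicom. -/
def AvoidsBicom (t : LTree) : Prop := ∀ s : LTree, Subtree s t → ¬ IsBadBicom s

/-- The least class `N`: `leaf ∈ N`; `x(u, α) ∈ N` for `u ∈ N`, `α` pure-`x`;
`y(u, β) ∈ N` for `u ∈ N`, `β` pure-`y`. -/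
inductive NormalBicom : LTree → Prop
  | leaf : NormalBicom leaf
  | xn {u α : LTree} : NormalBicom u → PureX α → NormalBicom (x u α)
  | yn {u β : LTree} : NormalBicom u → PureY β → NormalBicom (y u β)

end LTree

namespace LTree

theorem avoids_x {u v : LTree} :
    AvoidsBicom (x u v) ↔ AvoidsBicom u ∧ AvoidsBicom v ∧ ¬ Cx v := by
  constructor
  · intro h
    exact ⟨fun s hs => h s (.xl hs), fun s hs => h s (.xr hs),
      fun hc => h _ (.refl _) (Or.inl ⟨u, v, hc, rfl⟩)⟩
  · rintro ⟨hu, hv, hc⟩ s hs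
    cases hs with
    | refl =>
      rintro (⟨a, b, hb, e⟩ | ⟨a, b, hb, e⟩)
      · cases e; exact hc hb
      · cases e
    | xl h => exact hu s h
    | xr h => exact hv s h

theorem avoids_y {u v : LTree} :
    AvoidsBicom (y u v) ↔ AvoidsBicom u ∧ AvoidsBicom v ∧ ¬ Cy v := by
  constructor
  · intro h
    exact ⟨fun s hs => h s (.yl hs), fun s hs => h s (.yr hs),
      fun hc => h _ (.refl _) (Or.inr ⟨u, v, hc, rfl⟩)⟩
  · rintro ⟨hu, hv, hc⟩ s hs
    cases hs with
    | refl =>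
      rintro (⟨a, b, hb, e⟩ | ⟨a, b, hb, e⟩)
      · cases e
      · cases e; exact hc hb
    | yl h => exact hu s h
    | yr h => exact hv s h

theorem avoids_leaf : AvoidsBicom leaf := by
  intro s hs
  cases hs
  rintro (⟨a, b, hb, e⟩ | ⟨a, b, hb, e⟩) <;> cases e

theorem pureX_iff (t : LTree) : PureX t ↔ AvoidsBicom t ∧ ¬ Cx t := by
  induction t with
  | leaf => exact ⟨fun _ => ⟨avoids_leaf, fun h => nomatch h⟩, fun _ => .leaf⟩
  | x u v ihu ihv =>
    constructor
    · intro h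
      cases h with
      | node hu hv =>
        rw [ihu] at hu
        rw [ihv] at hv
        refine ⟨avoids_x.2 ⟨hu.1, hv.1, hv.2⟩, fun h => ?_⟩
        cases h with
        | step _ hc => exact hu.2 hc
    · rintro ⟨h, hc⟩
      obtain ⟨h1, h2, h3⟩ := avoids_x.1 h
      exact .node (ihu.2 ⟨h1, fun h => hc (.step _ h)⟩) (ihv.2 ⟨h2, h3⟩)
  | y u v _ _ => exact ⟨fun h => (nomatch h), fun h => absurd (Cx.base _ _) h.2⟩

theorem pureY_iff (t : LTree) : PureY t ↔ AvoidsBicom t ∧ ¬ Cy t := by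
  induction t with
  | leaf => exact ⟨fun _ => ⟨avoids_leaf, fun h => nomatch h⟩, fun _ => .leaf⟩
  | y u v ihu ihv =>
    constructor
    · intro h
      cases h with
      | node hu hv =>
        rw [ihu] at hu
        rw [ihv] at hv
        refine ⟨avoids_y.2 ⟨hu.1, hv.1, hv.2⟩, fun h => ?_⟩
        cases h with
        | step _ hc => exact hu.2 hc
    · rintro ⟨h, hc⟩
      obtain ⟨h1, h2, h3⟩ := avoids_y.1 h
      exact .node (ihu.2 ⟨h1, fun h => hc (.step _ h)⟩) (ihv.2 ⟨h2, h3⟩)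
  | x u v _ _ => exact ⟨fun h => (nomatch h), fun h => absurd (Cy.base _ _) h.2⟩

end LTree

open LTree in
/-- A labeled planar binary tree contains no subtree of the form `x(u, c)` with
`c ∈ C_x` and no subtree of the form `y(u, c)` with `c ∈ C_y` iff it belongs to
the least class `N` of normal monomials of noncom-Bicom. -/
theorem noncomBicom_normal_forms :
    ∀ t : LTree, AvoidsBicom t ↔ NormalBicom t := by
  intro t
  induction t with
  | leaf => exact ⟨fun _ => .leaf, fun _ => avoids_leaf⟩
  | x u v ihu _ =>
    rw [avoids_x, ← pureX_iff, ihu]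
    exact ⟨fun h => .xn h.1 h.2, fun h => by cases h with | xn a b => exact ⟨a, b⟩⟩
  | y u v ihu _ =>
    rw [avoids_y, ← pureY_iff, ihu]
    exact ⟨fun h => .yn h.1 h.2, fun h => by cases h with | yn a b => exact ⟨a, b⟩⟩
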